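/- Let G be a cactus graph on n vertices and U a set of 4k−2 vertices of G. Then there exists a partition of U into k parts such that the geodesic convex hulls of all parts have a common vertex. -/

import Mathlib

/-- A set of vertices is geodesically convex if it contains every vertex on
every shortest path between two of its elements. -/
def IsGeodesicallyConvex {V : Type*} (G : SimpleGraph V) (S : Set V) : Prop :=
  ∀ u ∈ S, ∀ v ∈ S, ∀ w : G.Walk u v, w.length = G.dist u v → ∀ x ∈ w.support, x ∈ S

/-- The geodesic convex hull of a set of vertices. -/
def geodesicConvexHull {V : Type*} (G : SimpleGraph V) (A : Set V) : Set V :=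
  ⋂₀ {S : Set V | IsGeodesicallyConvex G S ∧ A ⊆ S}

/-!
Write `G - x` for `G` with all edges at `x` deleted. If every component of `G - x` contains fewer
than `2k` of the `4k - 2` points, sort the points by component and pair the `i`-th one with the
`(i + 2k - 1)`-th one: the two are separated by `x`, so `x` lies in the hull of each pair.

Otherwise every vertex has a majority component. Take `x` minimizing the sum of the distances to
the points; the majority component at any other vertex then contains `x`. Two majority components
always meet, so an edge from `x` into its own majority component is not a bridge and lies on a
cycle `C`. In a cactus graph every vertex hangs off exactly one vertex of `C`, and for this `C`
only a minority of the points hangs off any one vertex. Sorting the points along `C` again pairs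
them up so that one vertex of `C` lies on a geodesic inside the hull of each pair.
-/

open Finset SimpleGraph

section Hull

variable {V : Type*} {G : SimpleGraph V}

theorem subset_geodesicConvexHull (A : Set V) : A ⊆ geodesicConvexHull G A :=
  Set.subset_sInter fun _ hS => hS.2

theorem IsGeodesicallyConvex.geodesicConvexHull_subset {A S : Set V}
    (hS : IsGeodesicallyConvex G S) (hAS : A ⊆ S) : geodesicConvexHull G A ⊆ S :=
  Set.sInter_subset_of_mem ⟨hS, hAS⟩

theorem isGeodesicallyConvex_geodesicConvexHull (A : Set V) :
    IsGeodesicallyConvex G (geodesicConvexHull G A) :=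
  fun u hu v hv w hw x hx S hS => hS.1 u (hu S hS) v (hv S hS) w hw x hx

theorem geodesicConvexHull_subset_geodesicConvexHull {A B : Set V}
    (h : A ⊆ geodesicConvexHull G B) : geodesicConvexHull G A ⊆ geodesicConvexHull G B :=
  (isGeodesicallyConvex_geodesicConvexHull B).geodesicConvexHull_subset h

theorem geodesicConvexHull_mono {A B : Set V} (h : A ⊆ B) :
    geodesicConvexHull G A ⊆ geodesicConvexHull G B :=
  geodesicConvexHull_subset_geodesicConvexHull (h.trans (subset_geodesicConvexHull B))

theorem mem_geodesicConvexHull_pair_of_mem_support {u v x : V} {w : G.Walk u v}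
    (hw : w.length = G.dist u v) (hx : x ∈ w.support) : x ∈ geodesicConvexHull G {u, v} :=
  isGeodesicallyConvex_geodesicConvexHull {u, v} u (subset_geodesicConvexHull _ (.inl rfl))
    v (subset_geodesicConvexHull _ (.inr rfl)) w hw x hx

theorem mem_geodesicConvexHull_pair_of_dist_add_dist_le (hconn : G.Connected) {u v x : V}
    (h : G.dist u x + G.dist x v ≤ G.dist u v) : x ∈ geodesicConvexHull G {u, v} := by
  obtain ⟨p, hp⟩ := hconn.exists_walk_length_eq_dist u x
  obtain ⟨q, hq⟩ := hconn.exists_walk_length_eq_dist x v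
  refine mem_geodesicConvexHull_pair_of_mem_support (w := p.append q) ?_ (by simp)
  exact le_antisymm (by rwa [Walk.length_append, hp, hq]) (dist_le _)

theorem reachable_deleteIncidenceSet_of_notMem_support {u v x : V} {w : G.Walk u v}
    (h : x ∉ w.support) : (G.deleteIncidenceSet x).Reachable u v := by
  induction w with
  | nil => rfl
  | cons hadj w ih =>
    simp only [Walk.support_cons, List.mem_cons, not_or] at h
    refine .trans (Adj.reachable (deleteIncidenceSet_adj.2 ⟨hadj, Ne.symm h.1, ?_⟩)) (ih h.2)
    exact ne_of_mem_of_not_mem w.start_mem_support h.2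

theorem dist_add_dist_le_of_not_reachable (hconn : G.Connected) {u v x : V}
    (h : ¬ (G.deleteIncidenceSet x).Reachable u v) :
    G.dist u x + G.dist x v ≤ G.dist u v := by
  classical
  obtain ⟨w, hw⟩ := hconn.exists_walk_length_eq_dist u v
  have hx : x ∈ w.support := not_not.1 (mt reachable_deleteIncidenceSet_of_notMem_support h)
  calc G.dist u x + G.dist x v
      ≤ (w.takeUntil x hx).length + (w.dropUntil x hx).length :=
        add_le_add (dist_le _) (dist_le _)
    _ = G.dist u v := by rw [← Walk.length_append, Walk.take_spec, hw]

theorem mem_geodesicConvexHull_pair_of_not_reachable (hconn : G.Connected) {u v x : V}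
    (h : ¬ (G.deleteIncidenceSet x).Reachable u v) : x ∈ geodesicConvexHull G {u, v} :=
  mem_geodesicConvexHull_pair_of_dist_add_dist_le hconn (dist_add_dist_le_of_not_reachable hconn h)

end Hull

section TverbergPartition

variable {V : Type*} {G : SimpleGraph V} [DecidableEq V] {k : ℕ} {U W : Finset V}

/-- `U` has a Tverberg partition into `k` parts: their geodesic convex hulls share a vertex. -/
def HasTverbergPartition (G : SimpleGraph V) (k : ℕ) (U : Finset V) : Prop :=
  ∃ A : Fin k → Finset V,
    (∀ i j, i ≠ j → Disjoint (A i) (A j)) ∧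
    (Finset.univ.biUnion A = U) ∧
    (⋂ i, geodesicConvexHull G (A i : Set V)).Nonempty

theorem hasTverbergPartition_of_disjoint_subsets (hk : 1 ≤ k) {B : Fin k → Finset V}
    (hBU : ∀ i, B i ⊆ U) (hB : ∀ i j, i ≠ j → Disjoint (B i) (B j)) {x : V}
    (hx : ∀ i, x ∈ geodesicConvexHull G (B i : Set V)) : HasTverbergPartition G k U := by
  have hcolor (v : V) : ∃ i, ∀ j, v ∈ B j → j = i := by
    by_cases h : ∃ i, v ∈ B i
    · obtain ⟨i, hi⟩ := h
      exact ⟨i, fun j hj => by_contra fun hji => disjoint_left.1 (hB j i hji) hj hi⟩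
    · exact ⟨⟨0, hk⟩, fun j hj => absurd ⟨j, hj⟩ h⟩
  choose color hcolor using hcolor
  refine ⟨fun i => {v ∈ U | color v = i}, fun i j hij => ?_, ?_, x, Set.mem_iInter.2 fun i => ?_⟩
  · exact disjoint_filter.2 fun v _ hi hj => hij (hi.symm.trans hj)
  · ext v
    simp
  · refine geodesicConvexHull_mono (fun v hv => ?_) (hx i)
    exact mem_coe.2 (mem_filter.2 ⟨hBU i hv, (hcolor v i hv).symm⟩)

theorem HasTverbergPartition.mono (hk : 1 ≤ k) (hUW : U ⊆ W) (h : HasTverbergPartition G k U) :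
    HasTverbergPartition G k W := by
  obtain ⟨A, hdisj, rfl, x, hx⟩ := h
  exact hasTverbergPartition_of_disjoint_subsets hk
    (fun i => (subset_biUnion_of_mem A (mem_univ i)).trans hUW) hdisj (Set.mem_iInter.1 hx)

theorem hasTverbergPartition_of_pairs (hk : 1 ≤ k) {p : ℕ → V}
    (hp : Set.BijOn p (Set.Iio #U) U) {a b : ℕ} (hab : a + k ≤ b) (hb : b + k ≤ #U) {x : V}
    (hx : ∀ i < k, x ∈ geodesicConvexHull G {p (a + i), p (b + i)}) :
    HasTverbergPartition G k U := by
  refine hasTverbergPartition_of_disjoint_subsets hk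
    (B := fun i => {p (a + i), p (b + i)}) (fun i => ?_) (fun i j hij => ?_) (x := x) fun i => ?_
  · have hi := i.isLt
    exact insert_subset (hp.mapsTo (Set.mem_Iio.2 (by omega)))
      (singleton_subset_iff.2 (hp.mapsTo (Set.mem_Iio.2 (by omega))))
  · have hi := i.isLt
    have hj := j.isLt
    have hij' : (i : ℕ) ≠ j := Fin.val_ne_of_ne hij
    have hne {s t : ℕ} (hs : s < #U) (ht : t < #U) (hst : s ≠ t) : p s ≠ p t :=
      hp.injOn.ne hs ht hst
    simp only [disjoint_insert_left, disjoint_singleton_left, mem_insert, mem_singleton, not_or]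
    exact ⟨⟨hne (by omega) (by omega) (by omega), hne (by omega) (by omega) (by omega)⟩,
      hne (by omega) (by omega) (by omega), hne (by omega) (by omega) (by omega)⟩
  · rw [coe_pair]
    exact hx i i.isLt

end TverbergPartition

section SortedEnumeration

variable {V α : Type*} [LinearOrder α] {U : Finset V} {f : V → α} {p : ℕ → V}

theorem exists_bijOn_monotoneOn_comp [Nonempty V] (U : Finset V) (f : V → α) :
    ∃ p : ℕ → V, Set.BijOn p (Set.Iio #U) U ∧ MonotoneOn (f ∘ p) (Set.Iio #U) := by
  let e : Fin #U ≃ U := (Tuple.sort fun i => f (U.equivFin.symm i)).trans U.equivFin.symm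
  have hmono : Monotone fun i => f (e i) := Tuple.monotone_sort fun i => f (U.equivFin.symm i)
  let p : ℕ → V := fun i => if h : i < #U then e ⟨i, h⟩ else Classical.arbitrary V
  have hp {i : ℕ} (h : i < #U) : p i = e ⟨i, h⟩ := dif_pos h
  refine ⟨p, ⟨fun i hi => ?_, fun i hi j hj hij => ?_, fun u hu => ?_⟩, fun i hi j hj hij => ?_⟩
  · rw [hp hi]
    exact (e _).2
  · rw [hp hi, hp hj] at hij
    exact congrArg Fin.val (e.injective (Subtype.ext hij))
  · refine ⟨e.symm ⟨u, hu⟩, Fin.isLt _, ?_⟩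
    rw [hp (Fin.isLt _), Fin.eta, e.apply_symm_apply]
  · rw [Function.comp_apply, Function.comp_apply, hp hi, hp hj]
    exact hmono (Fin.mk_le_mk.2 hij)

theorem card_filter_eq_card_filter_range (hp : Set.BijOn p (Set.Iio #U) U) (P : V → Prop)
    [DecidablePred P] : #{u ∈ U | P u} = #{i ∈ range #U | P (p i)} := by
  classical
  have hU : (range #U).image p = U := by
    rw [← coe_inj, coe_image, coe_range, hp.image_eq]
  conv_lhs => rw [← hU, filter_image]
  exact card_image_of_injOn (hp.injOn.mono fun i hi => by simpa using (mem_filter.1 hi).1)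

theorem sub_lt_card_fiber_of_eq (hp : Set.BijOn p (Set.Iio #U) U)
    (hf : MonotoneOn (f ∘ p) (Set.Iio #U)) {i j : ℕ} (hij : i ≤ j) (hj : j < #U)
    (h : f (p i) = f (p j)) : j - i < #{u ∈ U | f u = f (p i)} := by
  have hsub : Icc i j ⊆ {l ∈ range #U | f (p l) = f (p i)} := by
    intro l hl
    obtain ⟨hil, hlj⟩ := mem_Icc.1 hl
    have hl' : l < #U := hlj.trans_lt hj
    refine mem_filter.2 ⟨mem_range.2 hl', le_antisymm ?_ (hf (hil.trans_lt hl') hl' hil)⟩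
    exact (hf hl' hj hlj).trans_eq h.symm
  have hcard := card_le_card hsub
  rw [← card_filter_eq_card_filter_range hp (f · = f (p i)), Nat.card_Icc] at hcard
  omega

theorem le_apply_of_card_filter_lt_le (hp : Set.BijOn p (Set.Iio #U) U)
    (hf : MonotoneOn (f ∘ p) (Set.Iio #U)) {t : α} {i : ℕ} (hi : i < #U)
    (h : #{u ∈ U | f u < t} ≤ i) : t ≤ f (p i) := by
  by_contra! hlt
  have hsub : range (i + 1) ⊆ {l ∈ range #U | f (p l) < t} := by
    intro l hl
    have hli : l ≤ i := Nat.lt_succ_iff.1 (mem_range.1 hl)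
    exact mem_filter.2 ⟨mem_range.2 (hli.trans_lt hi), (hf (hli.trans_lt hi) hi hli).trans_lt hlt⟩
  have hcard := card_le_card hsub
  rw [← card_filter_eq_card_filter_range hp (f · < t), card_range] at hcard
  omega

end SortedEnumeration

section Branch

variable {V : Type*} {G : SimpleGraph V} {U : Finset V} {k : ℕ} {u v x y : V}

open scoped Classical in
/-- The branch of `U` at `x` through `v`: the elements of `U` in the component of `v` in the graph
obtained from `G` by isolating `x`. The branch at `x` through `x` itself is contained in `{x}`. -/
noncomputable def branchAt (G : SimpleGraph V) (U : Finset V) (x v : V) : Finset V :=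
  {u ∈ U | (G.deleteIncidenceSet x).Reachable v u}

theorem mem_branchAt : u ∈ branchAt G U x v ↔ u ∈ U ∧ (G.deleteIncidenceSet x).Reachable v u := by
  classical exact mem_filter

theorem branchAt_subset : branchAt G U x v ⊆ U := fun _ hu => (mem_branchAt.1 hu).1

theorem branchAt_congr (h : (G.deleteIncidenceSet x).Reachable u v) :
    branchAt G U x u = branchAt G U x v := by
  ext t
  simp only [mem_branchAt, and_congr_right_iff]
  exact fun _ => ⟨h.symm.trans, h.trans⟩

theorem hasTverbergPartition_of_card_branchAt_lt [DecidableEq V] (hconn : G.Connected)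
    (hk : 1 ≤ k) (hU : 3 * k - 1 ≤ #U) (hx : ∀ v, #(branchAt G U x v) < 2 * k) :
    HasTverbergPartition G k U := by
  have : Nonempty V := ⟨x⟩
  let component : V → (G.deleteIncidenceSet x).ConnectedComponent := connectedComponentMk _
  obtain ⟨_, -⟩ := exists_wellFoundedLT (G.deleteIncidenceSet x).ConnectedComponent
  obtain ⟨p, hp, hmono⟩ := exists_bijOn_monotoneOn_comp U component
  refine hasTverbergPartition_of_pairs hk hp (a := 0) (b := 2 * k - 1) (by omega) (by omega)
    (x := x) fun i hi => mem_geodesicConvexHull_pair_of_not_reachable hconn fun hreach => ?_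
  have hcard := sub_lt_card_fiber_of_eq hp hmono (by omega) (by omega)
    (ConnectedComponent.sound hreach)
  have hfiber : {u ∈ U | component u = component (p (0 + i))} = branchAt G U x (p (0 + i)) := by
    ext u
    rw [mem_filter, mem_branchAt, ConnectedComponent.eq, reachable_comm]
  rw [hfiber] at hcard
  have := hx (p (0 + i))
  omega

theorem reachable_median_of_majority (hconn : G.Connected)
    (hx : ∀ y, ∑ u ∈ U, G.dist x u ≤ ∑ u ∈ U, G.dist y u) (hyx : y ≠ x)
    (hmaj : #U < 2 * #(branchAt G U y v)) : (G.deleteIncidenceSet y).Reachable v x := by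
  classical
  by_contra hvx
  set T := branchAt G U y v
  have hTU : T ⊆ U := branchAt_subset
  -- Moving from `x` to `y` gains `dist x y` on all of `T` and loses at most that elsewhere.
  have hgain : ∀ u ∈ T, G.dist x y + G.dist y u ≤ G.dist x u := fun u hu =>
    dist_add_dist_le_of_not_reachable hconn fun hxu =>
      hvx ((mem_branchAt.1 hu).2.trans hxu.symm)
  have hloss : ∀ u ∈ U \ T, G.dist y u ≤ G.dist x y + G.dist x u := fun u _ =>
    G.dist_comm (u := x) (v := y) ▸ hconn.dist_triangle
  have hgainSum := sum_le_sum hgain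
  have hlossSum := sum_le_sum hloss
  simp only [sum_add_distrib, sum_const, smul_eq_mul, card_sdiff_of_subset hTU] at hgainSum hlossSum
  have hmedian := hx y
  rw [← sum_sdiff hTU, ← sum_sdiff (f := fun u => G.dist y u) hTU] at hmedian
  have hpos : 0 < G.dist x y := hconn.pos_dist_of_ne hyx.symm
  have hlt : (#U - #T) * G.dist x y < #T * G.dist x y := by gcongr; omega
  omega

theorem exists_adj_reachable_of_one_lt_card_branchAt (hconn : G.Connected)
    (h : 1 < #(branchAt G U x v)) : ∃ y, G.Adj x y ∧ (G.deleteIncidenceSet x).Reachable v y := by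
  obtain ⟨u, hu, hux⟩ := exists_mem_ne h x
  obtain ⟨w, hw⟩ := hconn.exists_isPath x u
  cases w with
  | nil => exact absurd rfl hux
  | cons hadj q =>
    have hq := reachable_deleteIncidenceSet_of_notMem_support ((Walk.cons_isPath_iff _ _).1 hw).2
    exact ⟨_, hadj, (mem_branchAt.1 hu).2.trans hq.symm⟩

theorem exists_isCycle_of_majority_branches (hadj : G.Adj x y)
    (hx : #U < 2 * #(branchAt G U x y)) (hy : #U < 2 * #(branchAt G U y x)) :
    ∃ (v : V) (p : G.Walk v v), p.IsCycle ∧ s(x, y) ∈ p.edges := by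
  classical
  obtain ⟨u, hu⟩ := inter_nonempty_of_card_lt_card_add_card (branchAt_subset (G := G))
    (branchAt_subset (G := G)) (by omega : #U < #(branchAt G U x y) + #(branchAt G U y x))
  obtain ⟨hux, huy⟩ := mem_inter.1 hu
  have hle {a : V} (ha : s(x, y) ∈ G.incidenceSet a) :
      G.deleteIncidenceSet a ≤ G.deleteEdges {s(x, y)} :=
    deleteEdges_anti (Set.singleton_subset_iff.2 ha)
  have hyu := (mem_branchAt.1 hux).2.mono (hle ⟨hadj, Sym2.mem_mk_left x y⟩)
  have hxu := (mem_branchAt.1 huy).2.mono (hle ⟨hadj, Sym2.mem_mk_right x y⟩)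
  exact adj_and_reachable_delete_edges_iff_exists_cycle.1 ⟨hadj, hxu.trans hyu.symm⟩

theorem exists_isCycle_forall_majority (hconn : G.Connected) (hU : 1 < #U)
    (hmaj : ∀ x, ∃ v, #U < 2 * #(branchAt G U x v)) :
    ∃ (x : V) (p : G.Walk x x), p.IsCycle ∧
      ∀ y ∈ p.support, ∃ z ∈ p.support, z ≠ y ∧ #U < 2 * #(branchAt G U y z) := by
  have := hconn.nonempty
  let x := Function.argmin fun x => ∑ u ∈ U, G.dist x u
  have hmedian (y : V) : ∑ u ∈ U, G.dist x u ≤ ∑ u ∈ U, G.dist y u :=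
    Function.argmin_le (fun x => ∑ u ∈ U, G.dist x u) y
  have htoward {y : V} (hyx : y ≠ x) : #U < 2 * #(branchAt G U y x) := by
    obtain ⟨v, hv⟩ := hmaj y
    rwa [branchAt_congr (reachable_median_of_majority hconn hmedian hyx hv)] at hv
  obtain ⟨v, hv⟩ := hmaj x
  obtain ⟨y, hxy, hvy⟩ := exists_adj_reachable_of_one_lt_card_branchAt hconn
    (by omega : 1 < #(branchAt G U x v))
  rw [branchAt_congr hvy] at hv
  obtain ⟨w, p, hp, hedge⟩ := exists_isCycle_of_majority_branches hxy hv (htoward hxy.ne')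
  refine ⟨w, p, hp, fun z _ => ?_⟩
  by_cases hzx : z = x
  · exact ⟨y, p.snd_mem_support_of_mem_edges hedge, hzx ▸ hxy.ne', hzx ▸ hv⟩
  · exact ⟨x, p.fst_mem_support_of_mem_edges hedge, Ne.symm hzx, htoward hzx⟩

end Branch

section CycleRetraction

theorem zmod_val_sub_natCast_of_lt {m : ℕ} [NeZero m] {a : ZMod m} {b : ℕ} (hab : a.val < b)
    (hbm : b ≤ m) : (a - b).val = a.val + m - b := by
  have hcast : a - b = (a.val + m - b : ℕ) := by
    rw [Nat.cast_sub (by omega), Nat.cast_add, ZMod.natCast_zmod_val, ZMod.natCast_self, add_zero]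
  rw [hcast, ZMod.val_cast_of_lt (by omega)]

theorem eq_add_natCast_val_sub_val {m : ℕ} [NeZero m] {a b s : ZMod m}
    (hab : (a - s).val ≤ (b - s).val) : b = a + ((b - s).val - (a - s).val : ℕ) := by
  rw [Nat.cast_sub hab, ZMod.natCast_zmod_val, ZMod.natCast_zmod_val, sub_sub_sub_cancel_right,
    add_sub_cancel]

theorem val_add_le_of_dense_arcs {V : Type*} {m : ℕ} [NeZero m] {U : Finset V} {k : ℕ}
    {f : V → ZMod m} {p : ℕ → V} (hp : Set.BijOn p (Set.Iio #U) U)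
    (hmono : MonotoneOn ((fun u => (f u).val) ∘ p) (Set.Iio #U))
    (hdense : ∀ s, k ≤ #{u ∈ U | (f u - s).val < m / 2}) {i : ℕ} (hi : i < k) :
    (f (p i)).val + m ≤ (f (p (#U - k + i))).val + m / 2 := by
  have hkU : k ≤ #U := (hdense 0).trans (card_filter_le _ _)
  set a := (f (p i)).val
  set b := (f (p (#U - k + i))).val
  have hbm : b < m := ZMod.val_lt _
  by_contra! hfar
  -- Otherwise the half-cycle starting just after `b` ends before `a`, hence misses the points with
  -- indices `i, …, #U - k + i`, and only `k - 1` points remain.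
  have hsub : {l ∈ range #U | (f (p l) - (b + 1 : ℕ)).val < m / 2} ⊆
      range i ∪ Ico (#U - k + i + 1) #U := by
    intro l hl
    obtain ⟨hlU, hlt⟩ := mem_filter.1 hl
    rw [mem_range] at hlU
    rw [mem_union, mem_range, mem_Ico]
    by_contra! hout
    have hal : a ≤ (f (p l)).val := hmono (Set.mem_Iio.2 (by omega)) hlU hout.1
    have hlb : (f (p l)).val ≤ b := hmono hlU (Set.mem_Iio.2 (by omega)) (by omega)
    have hval := zmod_val_sub_natCast_of_lt (show (f (p l)).val < b + 1 by omega) (by omega)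
    omega
  have hcard := (card_le_card hsub).trans (card_union_le _ _)
  rw [← card_filter_eq_card_filter_range hp (fun u => (f u - (b + 1 : ℕ)).val < m / 2),
    card_range, Nat.card_Ico] at hcard
  have := hdense (b + 1 : ℕ)
  omega

/-- A cycle `vert 0, …, vert (m - 1)` of `G` with a map `proj` of all vertices onto it such that
each vertex hangs off the cycle at `vert (proj v)`: only edges of the cycle itself join vertices
with different projections. Indices live in `ZMod m`, so that arcs are described by addition. -/
structure CycleRetraction {V : Type*} (G : SimpleGraph V) (m : ℕ) where
  vert : ZMod m → V
  proj : V → ZMod m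
  adj_vert_add_one (i : ZMod m) : G.Adj (vert i) (vert (i + 1))
  proj_vert (i : ZMod m) : proj (vert i) = i
  eq_vert_proj_of_adj {u v : V} : G.Adj u v → proj u ≠ proj v → u = vert (proj u)
  proj_sub_proj_of_adj {u v : V} : G.Adj u v → proj u ≠ proj v →
    proj v - proj u = 1 ∨ proj v - proj u = -1

namespace CycleRetraction

variable {V : Type*} {G : SimpleGraph V} {m : ℕ} (c : CycleRetraction G m) {u v : V} {i j : ZMod m}

theorem proj_eq_of_reachable (h : (G.deleteIncidenceSet (c.vert i)).Reachable u v)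
    (hu : c.proj u = i) : c.proj v = i := by
  obtain ⟨w⟩ := h
  induction w with
  | nil => exact hu
  | cons hadj _ ih =>
    obtain ⟨hadj, hne, -⟩ := deleteIncidenceSet_adj.1 hadj
    refine ih (by_contra fun hb => hne ?_)
    rw [c.eq_vert_proj_of_adj hadj (hu.trans_ne (Ne.symm hb)), hu]

theorem vert_proj_mem_geodesicConvexHull_pair (hconn : G.Connected) (huv : c.proj u ≠ c.proj v) :
    c.vert (c.proj u) ∈ geodesicConvexHull G {u, v} :=
  mem_geodesicConvexHull_pair_of_not_reachable hconn fun h =>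
    huv (c.proj_eq_of_reachable h rfl).symm

theorem dist_vert_add_le (hconn : G.Connected) (i : ZMod m) (d : ℕ) :
    G.dist (c.vert i) (c.vert (i + d)) ≤ d := by
  induction d with
  | zero => simp
  | succ d ih =>
    calc G.dist (c.vert i) (c.vert (i + (d + 1 : ℕ)))
        ≤ G.dist (c.vert i) (c.vert (i + d)) +
          G.dist (c.vert (i + d)) (c.vert (i + (d + 1 : ℕ))) := hconn.dist_triangle
      _ ≤ d + 1 := by
        refine add_le_add ih (dist_eq_one_iff_adj.2 ?_).le
        simpa only [Nat.cast_succ, add_assoc] using c.adj_vert_add_one (i + d)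

theorem natAbs_valMinAbs_proj_sub_le_dist [NeZero m] (hconn : G.Connected) (u v : V) :
    (c.proj v - c.proj u).valMinAbs.natAbs ≤ G.dist u v := by
  obtain ⟨w, hw⟩ := hconn.exists_walk_length_eq_dist u v
  rw [← hw]
  clear hw
  have hone : (1 : ZMod m).valMinAbs.natAbs ≤ 1 := by
    rw [ZMod.valMinAbs_natAbs_eq_min, ZMod.val_one_eq_one_mod]
    exact (min_le_left _ _).trans (Nat.mod_le 1 m)
  induction w with
  | nil => simp
  | @cons a b e hadj w ih =>
    have hstep : (c.proj b - c.proj a).valMinAbs.natAbs ≤ 1 := by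
      by_cases hab : c.proj a = c.proj b
      · simp [hab]
      · rcases c.proj_sub_proj_of_adj hadj hab with h | h
        · rwa [h]
        · rwa [h, ZMod.natAbs_valMinAbs_neg]
    calc (c.proj e - c.proj a).valMinAbs.natAbs
        = ((c.proj e - c.proj b) + (c.proj b - c.proj a)).valMinAbs.natAbs := by
          rw [sub_add_sub_cancel]
      _ ≤ (c.proj e - c.proj b).valMinAbs.natAbs + (c.proj b - c.proj a).valMinAbs.natAbs :=
          (ZMod.natAbs_valMinAbs_add_le _ _).trans (Int.natAbs_add_le _ _)
      _ ≤ w.length + 1 := add_le_add ih hstep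

theorem vert_add_mem_geodesicConvexHull_pair [NeZero m] (hconn : G.Connected)
    (huv : c.proj u ≠ c.proj v) {d e : ℕ} (hd : c.proj v = c.proj u + d) (hdm : d ≤ m / 2)
    (hed : e ≤ d) : c.vert (c.proj u + e) ∈ geodesicConvexHull G {u, v} := by
  have hends : ({c.vert (c.proj u), c.vert (c.proj v)} : Set V) ⊆ geodesicConvexHull G {u, v} := by
    refine Set.pair_subset (c.vert_proj_mem_geodesicConvexHull_pair hconn huv) ?_
    rw [Set.pair_comm]
    exact c.vert_proj_mem_geodesicConvexHull_pair hconn huv.symm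
  refine geodesicConvexHull_subset_geodesicConvexHull hends
    (mem_geodesicConvexHull_pair_of_dist_add_dist_le hconn ?_)
  have hto := c.dist_vert_add_le hconn (c.proj u) e
  have hfrom := c.dist_vert_add_le hconn (c.proj u + e) (d - e)
  have harc := c.natAbs_valMinAbs_proj_sub_le_dist hconn (c.vert (c.proj u)) (c.vert (c.proj v))
  rw [add_assoc, ← Nat.cast_add, Nat.add_sub_cancel' hed, ← hd] at hfrom
  rw [c.proj_vert, c.proj_vert, hd, add_sub_cancel_left,
    ZMod.valMinAbs_natCast_of_le_half hdm, Int.natAbs_natCast, ← hd] at harc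
  omega

theorem two_mul_card_fiber_lt {U : Finset V} (hij : j ≠ i)
    (hmaj : #U < 2 * #(branchAt G U (c.vert i) (c.vert j))) :
    2 * #{u ∈ U | c.proj u = i} < #U := by
  classical
  have hdisj : Disjoint {u ∈ U | c.proj u = i} (branchAt G U (c.vert i) (c.vert j)) := by
    refine disjoint_left.2 fun u hu hbranch => hij ?_
    rw [← c.proj_vert j]
    exact c.proj_eq_of_reachable (mem_branchAt.1 hbranch).2.symm (mem_filter.1 hu).2
  have hcard := card_le_card (union_subset (filter_subset (c.proj · = i) U)
    (branchAt_subset (G := G) (x := c.vert i) (v := c.vert j)))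
  rw [card_union_of_disjoint hdisj] at hcard
  omega

variable [DecidableEq V] [NeZero m] {U : Finset V} {k : ℕ}

theorem hasTverbergPartition_of_sparse_arc (hconn : G.Connected) (hk : 1 ≤ k)
    (hU : 4 * k - 2 ≤ #U) (hfiber : ∀ i, #{u ∈ U | c.proj u = i} < 2 * k) (s : ZMod m)
    (hs : #{u ∈ U | (c.proj u - s).val < m / 2} < k) : HasTverbergPartition G k U := by
  have : Nonempty V := ⟨c.vert s⟩
  let pos (u : V) : ℕ := (c.proj u - s).val
  obtain ⟨p, hp, hmono⟩ := exists_bijOn_monotoneOn_comp U pos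
  set D := #{u ∈ U | (c.proj u - s).val < m / 2}
  refine hasTverbergPartition_of_pairs hk hp (a := D) (b := D + (2 * k - 1)) (by omega) (by omega)
    (x := c.vert (c.proj (p (D + k - 1)))) fun i hi => ?_
  have hpos_le {a b : ℕ} (hab : a ≤ b) (hb : b < #U) : pos (p a) ≤ pos (p b) :=
    hmono (hab.trans_lt hb) hb hab
  have hstart : m / 2 ≤ pos (p (D + i)) :=
    le_apply_of_card_filter_lt_le hp hmono (by omega) (Nat.le_add_right D i)
  have hmid : pos (p (D + i)) ≤ pos (p (D + k - 1)) := hpos_le (by omega) (by omega)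
  have hlast : pos (p (D + k - 1)) ≤ pos (p (D + (2 * k - 1) + i)) :=
    hpos_le (by omega) (by omega)
  have hend : pos (p (D + (2 * k - 1) + i)) < m := ZMod.val_lt _
  have hne : c.proj (p (D + i)) ≠ c.proj (p (D + (2 * k - 1) + i)) := by
    intro heq
    have hcard := sub_lt_card_fiber_of_eq hp hmono (by omega) (by omega)
      (by simp only [pos, heq] : pos (p (D + i)) = pos (p (D + (2 * k - 1) + i)))
    have := hfiber (c.proj (p (D + i)))
    simp only [pos, ZMod.val_injective m |>.eq_iff, sub_left_inj] at hcard
    omega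
  have hadd {v : V} (hv : pos (p (D + i)) ≤ pos v) :
      c.proj v = c.proj (p (D + i)) + (pos v - pos (p (D + i)) : ℕ) :=
    eq_add_natCast_val_sub_val hv
  rw [hadd hmid]
  exact c.vert_add_mem_geodesicConvexHull_pair hconn hne (hadd (hmid.trans hlast))
    (by omega) (by omega)

/-- Every half-cycle contains at least `k` points, so a point and the one `k` places earlier in
cyclic order are at most a half-cycle apart; the `k` such pairs around `vert 0` all enclose it. -/
theorem hasTverbergPartition_of_dense_arcs (hconn : G.Connected) (hk : 1 ≤ k) (hU : 2 * k ≤ #U)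
    (hdense : ∀ s, k ≤ #{u ∈ U | (c.proj u - s).val < m / 2}) : HasTverbergPartition G k U := by
  have : Nonempty V := ⟨c.vert 0⟩
  obtain ⟨p, hp, hmono⟩ := exists_bijOn_monotoneOn_comp U fun u => (c.proj u).val
  refine hasTverbergPartition_of_pairs hk hp (a := 0) (b := #U - k) (by omega) (by omega)
    (x := c.vert 0) fun i hi => ?_
  rw [zero_add]
  set a := (c.proj (p i)).val with ha
  set b := (c.proj (p (#U - k + i))).val with hb
  have hbm : b < m := ZMod.val_lt _
  have hclose : a + m ≤ b + m / 2 := val_add_le_of_dense_arcs hp hmono hdense hi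
  have hne : c.proj (p (#U - k + i)) ≠ c.proj (p i) := by
    intro heq
    have : b = a := congrArg ZMod.val heq
    omega
  have hzero : c.proj (p (#U - k + i)) + (m - b : ℕ) = 0 := by
    rw [← ZMod.natCast_zmod_val (c.proj _), ← hb, ← Nat.cast_add, Nat.add_sub_cancel' hbm.le,
      ZMod.natCast_self]
  have hturn : c.proj (p i) = c.proj (p (#U - k + i)) + (m - b + a : ℕ) := by
    rw [Nat.cast_add, ← add_assoc, hzero, zero_add, ha, ZMod.natCast_zmod_val]
  rw [Set.pair_comm, ← hzero]
  exact c.vert_add_mem_geodesicConvexHull_pair hconn hne hturn (by omega) (by omega)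

theorem hasTverbergPartition (hconn : G.Connected) (hk : 1 ≤ k) (hU : 4 * k - 2 ≤ #U)
    (hfiber : ∀ i, #{u ∈ U | c.proj u = i} < 2 * k) : HasTverbergPartition G k U := by
  by_cases h : ∃ s, #{u ∈ U | (c.proj u - s).val < m / 2} < k
  · obtain ⟨s, hs⟩ := h
    exact c.hasTverbergPartition_of_sparse_arc hconn hk hU hfiber s hs
  · exact c.hasTverbergPartition_of_dense_arcs hconn hk (by omega) (by simpa using h)

end CycleRetraction

end CycleRetraction

section Cactus

variable {V : Type*} {G : SimpleGraph V} {u v x : V}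

/-- No two distinct vertices are joined by three pairwise edge-disjoint paths; the connected graphs
with this property are the cactus graphs. -/
def NoThreeEdgeDisjointPaths (G : SimpleGraph V) : Prop :=
  ¬ ∃ (u v : V) (_ : u ≠ v) (p q r : G.Walk u v),
    p.IsPath ∧ q.IsPath ∧ r.IsPath ∧
    List.Disjoint p.edges q.edges ∧ List.Disjoint q.edges r.edges ∧
    List.Disjoint p.edges r.edges

theorem NoThreeEdgeDisjointPaths.eq_of_disjoint_walks (hG : NoThreeEdgeDisjointPaths G)
    (p q r : G.Walk u v) (hpq : List.Disjoint p.edges q.edges)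
    (hqr : List.Disjoint q.edges r.edges) (hpr : List.Disjoint p.edges r.edges) : u = v := by
  classical
  have hbypass {a b : G.Walk u v} (hab : List.Disjoint a.edges b.edges) :
      List.Disjoint a.bypass.edges b.bypass.edges := fun _ ha hb =>
    hab (a.edges_bypass_subset_edges ha) (b.edges_bypass_subset_edges hb)
  by_contra huv
  exact hG ⟨u, v, huv, p.bypass, q.bypass, r.bypass, p.bypass_isPath, q.bypass_isPath,
    r.bypass_isPath, hbypass hpq, hbypass hqr, hbypass hpr⟩

theorem exists_disjoint_walks_of_isTrail {p : G.Walk x x} (hp : p.IsTrail) (hu : u ∈ p.support)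
    (hv : v ∈ p.support) : ∃ a b : G.Walk u v,
      a.edges ⊆ p.edges ∧ b.edges ⊆ p.edges ∧ List.Disjoint a.edges b.edges := by
  classical
  have hv' : v ∈ (p.rotate u hu).support := (p.mem_support_rotate_iff u hu).2 hv
  have hsub : (p.rotate u hu).edges ⊆ p.edges := fun e => (p.rotate_edges u hu).mem_iff.1
  refine ⟨(p.rotate u hu).takeUntil v hv', ((p.rotate u hu).dropUntil v hv').reverse,
    List.Subset.trans (Walk.edges_takeUntil_subset_edges _ hv') hsub, ?_, ?_⟩
  · rw [Walk.edges_reverse]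
    exact List.Subset.trans (List.reverse_subset.2 (Walk.edges_dropUntil_subset_edges _ hv')) hsub
  · rw [Walk.edges_reverse, List.disjoint_reverse_right]
    exact (hp.rotate hu).disjoint_edges_takeUntil_dropUntil hv'

theorem NoThreeEdgeDisjointPaths.eq_of_reachable_deleteEdges (hG : NoThreeEdgeDisjointPaths G)
    {p : G.Walk x x} (hp : p.IsTrail) (hu : u ∈ p.support) (hv : v ∈ p.support)
    (huv : (G.deleteEdges {e | e ∈ p.edges}).Reachable u v) : u = v := by
  obtain ⟨r⟩ := huv
  obtain ⟨a, b, ha, hb, hab⟩ := exists_disjoint_walks_of_isTrail hp hu hv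
  have hr : List.Disjoint p.edges (r.mapLe (deleteEdges_le _)).edges := fun e hep her => by
    rw [Walk.edges_mapLe_eq_edges] at her
    have := r.edges_subset_edgeSet her
    rw [edgeSet_deleteEdges] at this
    exact this.2 hep
  exact hG.eq_of_disjoint_walks a b (r.mapLe (deleteEdges_le _)) hab
    (fun _ he => hr (hb he)) (fun _ he => hr (ha he))

theorem exists_mem_support_reachable_deleteEdges (hconn : G.Connected) (p : G.Walk x x) (v : V) :
    ∃ z ∈ p.support, (G.deleteEdges {e | e ∈ p.edges}).Reachable v z := by
  obtain ⟨w⟩ := hconn v x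
  induction w with
  | nil => exact ⟨_, p.start_mem_support, .rfl⟩
  | @cons a b _ hadj _ ih =>
    by_cases hab : s(a, b) ∈ p.edges
    · exact ⟨a, p.fst_mem_support_of_mem_edges hab, .rfl⟩
    · obtain ⟨z, hz, hbz⟩ := ih p
      exact ⟨z, hz, (Adj.reachable (deleteEdges_adj.2 ⟨hadj, hab⟩)).trans hbz⟩

/-- The vertices of a closed walk, indexed cyclically. -/
def cyclicVert (p : G.Walk x x) (i : ZMod p.length) : V := p.getVert i.val

theorem cyclicVert_natCast (p : G.Walk x x) {n : ℕ} (hn : n ≤ p.length) :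
    cyclicVert p n = p.getVert n := by
  rcases hn.lt_or_eq with h | rfl
  · rw [cyclicVert, ZMod.val_cast_of_lt h]
  · simp [cyclicVert]

theorem cyclicVert_mem_support (p : G.Walk x x) (i : ZMod p.length) :
    cyclicVert p i ∈ p.support := p.getVert_mem_support _

theorem exists_cyclicVert_eq_of_mem_support {p : G.Walk x x} (hv : v ∈ p.support) :
    ∃ i, cyclicVert p i = v := by
  obtain ⟨n, rfl, hn⟩ := Walk.mem_support_iff_exists_getVert.1 hv
  exact ⟨n, cyclicVert_natCast p hn⟩

theorem exists_cyclicVert_of_mem_edges {p : G.Walk x x} (h : s(u, v) ∈ p.edges) :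
    ∃ i, s(cyclicVert p i, cyclicVert p (i + 1)) = s(u, v) := by
  obtain ⟨n, hn, he⟩ := p.mk_mem_edges_iff_exists.1 h
  refine ⟨n, ?_⟩
  rw [← Nat.cast_succ, cyclicVert_natCast p hn.le, cyclicVert_natCast p hn, he]

theorem adj_cyclicVert_add_one (p : G.Walk x x) [NeZero p.length] (i : ZMod p.length) :
    G.Adj (cyclicVert p i) (cyclicVert p (i + 1)) := by
  have hi : i + 1 = (i.val + 1 : ℕ) := by rw [Nat.cast_succ, ZMod.natCast_zmod_val]
  rw [hi, cyclicVert_natCast p (ZMod.val_lt i)]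
  exact p.adj_getVert_succ (ZMod.val_lt i)

theorem cyclicVert_injective {p : G.Walk x x} [NeZero p.length] (hp : p.IsCycle) :
    Function.Injective (cyclicVert p) := fun i j hij =>
  ZMod.val_injective _ (hp.getVert_injOn' (Nat.le_sub_one_of_lt (ZMod.val_lt i))
    (Nat.le_sub_one_of_lt (ZMod.val_lt j)) hij)

theorem NoThreeEdgeDisjointPaths.exists_cycleRetraction (hG : NoThreeEdgeDisjointPaths G)
    (hconn : G.Connected) {p : G.Walk x x} [NeZero p.length] (hp : p.IsCycle) :
    ∃ c : CycleRetraction G p.length, c.vert = cyclicVert p := by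
  have hex (v : V) :
      ∃ i, (G.deleteEdges {e | e ∈ p.edges}).Reachable v (cyclicVert p i) := by
    obtain ⟨z, hz, hvz⟩ := exists_mem_support_reachable_deleteEdges hconn p v
    obtain ⟨i, rfl⟩ := exists_cyclicVert_eq_of_mem_support hz
    exact ⟨i, hvz⟩
  choose proj hproj using hex
  have hproj_eq {v : V} {i : ZMod p.length}
      (h : (G.deleteEdges {e | e ∈ p.edges}).Reachable v (cyclicVert p i)) : proj v = i :=
    cyclicVert_injective hp (hG.eq_of_reachable_deleteEdges hp.isTrail
      (cyclicVert_mem_support p _) (cyclicVert_mem_support p i) ((hproj v).symm.trans h))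
  have hproj_vert (i : ZMod p.length) : proj (cyclicVert p i) = i := hproj_eq .rfl
  have hedge {u v : V} (hadj : G.Adj u v) (hne : proj u ≠ proj v) : s(u, v) ∈ p.edges :=
    by_contra fun he => hne (hproj_eq
      ((Adj.reachable (deleteEdges_adj.2 ⟨hadj, he⟩)).trans (hproj v)))
  refine ⟨⟨cyclicVert p, proj, adj_cyclicVert_add_one p, hproj_vert, ?_, ?_⟩, rfl⟩
  · intro u v hadj hne
    obtain ⟨i, rfl⟩ :=
      exists_cyclicVert_eq_of_mem_support (p.fst_mem_support_of_mem_edges (hedge hadj hne))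
    rw [hproj_vert]
  · intro u v hadj hne
    obtain ⟨i, hi⟩ := exists_cyclicVert_of_mem_edges (hedge hadj hne)
    rcases Sym2.eq_iff.1 hi with ⟨rfl, rfl⟩ | ⟨rfl, rfl⟩ <;> simp [hproj_vert]

end Cactus

theorem cactus_tverberg_general {V : Type*} [DecidableEq V] {G : SimpleGraph V}
    (hconn : G.Connected) (hG : NoThreeEdgeDisjointPaths G) {k : ℕ} (hk : 1 ≤ k) {U : Finset V}
    (hU : 4 * k - 2 ≤ #U) : HasTverbergPartition G k U := by
  obtain ⟨W, hWU, hW⟩ := exists_subset_card_eq hU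
  refine HasTverbergPartition.mono hk hWU ?_
  by_cases hmaj : ∀ x, ∃ v, #W < 2 * #(branchAt G W x v)
  · obtain ⟨x, p, hp, hp_maj⟩ := exists_isCycle_forall_majority hconn (by omega) hmaj
    have : NeZero p.length := ⟨by have := hp.three_le_length; omega⟩
    obtain ⟨c, hc⟩ := hG.exists_cycleRetraction hconn hp
    refine c.hasTverbergPartition hconn hk hW.ge fun i => ?_
    obtain ⟨z, hz, hzi, hz_maj⟩ := hp_maj (c.vert i) (hc ▸ cyclicVert_mem_support p i)
    obtain ⟨j, rfl⟩ := exists_cyclicVert_eq_of_mem_support hz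
    rw [← hc] at hzi hz_maj
    have := c.two_mul_card_fiber_lt (ne_of_apply_ne c.vert hzi) hz_maj
    omega
  · push Not at hmaj
    obtain ⟨x, hx⟩ := hmaj
    exact hasTverbergPartition_of_card_branchAt_lt hconn hk (by omega) (x := x) fun v => by
      have := hx v
      omega

/-- Tverberg for cactus graphs: any set of `4k-2` vertices of a cactus graph
(a connected graph with no three pairwise edge-disjoint paths between two
distinct vertices) has a partition into `k` parts whose geodesic convex hulls
have a common vertex. -/
theorem cactus_tverberg {V : Type*} [Fintype V] [DecidableEq V]
    (G : SimpleGraph V) (hconn : G.Connected)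
    (hcactus : ¬ ∃ (u v : V) (_ : u ≠ v) (p q r : G.Walk u v),
      p.IsPath ∧ q.IsPath ∧ r.IsPath ∧
      List.Disjoint p.edges q.edges ∧ List.Disjoint q.edges r.edges ∧
      List.Disjoint p.edges r.edges)
    (k : ℕ) (hk : 1 ≤ k) (U : Finset V) (hU : U.card = 4 * k - 2) :
    ∃ A : Fin k → Finset V,
      (∀ i j, i ≠ j → Disjoint (A i) (A j)) ∧
      (Finset.univ.biUnion A = U) ∧
      (⋂ i, geodesicConvexHull G (A i : Set V)).Nonempty :=
  cactus_tverberg_general hconn hcactus hk hU.ge
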